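/- arXiv:1911.06920 — 4 statements merged into one kernel-verified Lean document; each statement's English description precedes it below -/
import Mathlib

section
/- (Cauchy-point decrease, first form.) For every g ∈ ℝ^n, every symmetric n×n real matrix H, and every Δ > 0, there exists t ≥ 0 with t‖g‖ ≤ Δ such that the vector s := −t·g satisfies ⟨g, s⟩ + (1/2)⟨s, H s⟩ ≤ −(1/2)‖g‖·min{Δ, ‖g‖/‖H‖}, where min{Δ, ‖g‖/‖H‖} is interpreted as Δ when H = 0. Consequently, every step s achieving Cauchy decrease for (g, H, Δ) satisfies the same inequality. -/
/-! Let `M` be the minimum on the right-hand side, so that `0 ≤ M ≤ Δ` and `M * ‖H‖ ≤ ‖g‖`. For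
`g ≠ 0` the step of length `M` along `-g`, i.e. `t = M / ‖g‖`, has model value at most
`-M * ‖g‖ + (1/2) * M ^ 2 * ‖H‖` by Cauchy–Schwarz, and `M * ‖H‖ ≤ ‖g‖` turns this into
`-(1/2) * ‖g‖ * M`. A step achieving Cauchy decrease does at least as well as this one. -/

open RealInnerProductSpace Classical

noncomputable section

/-- A step `s` achieves Cauchy decrease for `(g, H, Δ)`: it is feasible and its model value
is at least as good as that of every feasible step `-t • g` along the steepest descent
direction. -/
def CauchyDecrease {n : ℕ} (g : EuclideanSpace ℝ (Fin n))
    (H : EuclideanSpace ℝ (Fin n) →L[ℝ] EuclideanSpace ℝ (Fin n))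
    (Δ : ℝ) (s : EuclideanSpace ℝ (Fin n)) : Prop :=
  ‖s‖ ≤ Δ ∧ ∀ t : ℝ, 0 ≤ t → t * ‖g‖ ≤ Δ →
    ⟪g, s⟫ + (1/2) * ⟪s, H s⟫ ≤ -(t * ‖g‖^2) + (1/2) * t^2 * ⟪g, H g⟫

/-- The Cauchy step for any length `M ≤ Δ` with `M * ‖H‖ ≤ ‖g‖`; the model value is written in
the expanded form used by `CauchyDecrease`. -/
theorem exists_cauchy_step {n : ℕ} (g : EuclideanSpace ℝ (Fin n))
    (H : EuclideanSpace ℝ (Fin n) →L[ℝ] EuclideanSpace ℝ (Fin n))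
    {Δ M : ℝ} (hM0 : 0 ≤ M) (hMΔ : M ≤ Δ) (hMH : M * ‖H‖ ≤ ‖g‖) :
    ∃ t : ℝ, 0 ≤ t ∧ t * ‖g‖ ≤ Δ ∧
      -(t * ‖g‖^2) + (1/2) * t^2 * ⟪g, H g⟫ ≤ -((1/2) * ‖g‖ * M) := by
  rcases eq_or_ne g 0 with rfl | hg
  · exact ⟨0, le_rfl, by simpa using hM0.trans hMΔ, by simp⟩
  have hg0 : ‖g‖ ≠ 0 := norm_ne_zero_iff.mpr hg
  have htM : M / ‖g‖ * ‖g‖ = M := div_mul_cancel₀ M hg0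
  refine ⟨M / ‖g‖, by positivity, htM.trans_le hMΔ, ?_⟩
  have hcurv : ⟪g, H g⟫ ≤ ‖H‖ * ‖g‖^2 := by
    calc ⟪g, H g⟫ ≤ ‖g‖ * ‖H g‖ := real_inner_le_norm g (H g)
      _ ≤ ‖g‖ * (‖H‖ * ‖g‖) := by gcongr; exact H.le_opNorm g
      _ = ‖H‖ * ‖g‖^2 := by ring
  calc -(M / ‖g‖ * ‖g‖^2) + (1/2) * (M / ‖g‖)^2 * ⟪g, H g⟫
      ≤ -(M / ‖g‖ * ‖g‖^2) + (1/2) * (M / ‖g‖)^2 * (‖H‖ * ‖g‖^2) := by gcongr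
    _ = -((M / ‖g‖ * ‖g‖) * ‖g‖) + (1/2) * (M / ‖g‖ * ‖g‖) * ((M / ‖g‖ * ‖g‖) * ‖H‖) := by ring
    _ = -(M * ‖g‖) + (1/2) * M * (M * ‖H‖) := by rw [htM]
    _ ≤ -(M * ‖g‖) + (1/2) * M * ‖g‖ := by gcongr
    _ = -((1/2) * ‖g‖ * M) := by ring

/-- Cauchy-point decrease, first form: there is a feasible Cauchy step `-t • g`
whose model value is at most `-(1/2)‖g‖ min{Δ, ‖g‖/‖H‖}` (interpreted as `Δ` when `H = 0`),
and consequently every step achieving Cauchy decrease satisfies the same bound. -/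
theorem cauchy_decrease_first_form
    {n : ℕ} (g : EuclideanSpace ℝ (Fin n))
    (H : EuclideanSpace ℝ (Fin n) →L[ℝ] EuclideanSpace ℝ (Fin n))
    (hHsymm : ∀ u v, ⟪H u, v⟫ = ⟪u, H v⟫)
    (Δ : ℝ) (hΔ : 0 < Δ) :
    (∃ t : ℝ, 0 ≤ t ∧ t * ‖g‖ ≤ Δ ∧
      ⟪g, (-t) • g⟫ + (1/2) * ⟪(-t) • g, H ((-t) • g)⟫ ≤
        -((1/2) * ‖g‖ * (if H = 0 then Δ else min Δ (‖g‖ / ‖H‖)))) ∧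
    (∀ s : EuclideanSpace ℝ (Fin n), CauchyDecrease g H Δ s →
      ⟪g, s⟫ + (1/2) * ⟪s, H s⟫ ≤
        -((1/2) * ‖g‖ * (if H = 0 then Δ else min Δ (‖g‖ / ‖H‖)))) := by
  obtain ⟨hM0, hMΔ, hMH⟩ : 0 ≤ (if H = 0 then Δ else min Δ (‖g‖ / ‖H‖)) ∧
      (if H = 0 then Δ else min Δ (‖g‖ / ‖H‖)) ≤ Δ ∧
      (if H = 0 then Δ else min Δ (‖g‖ / ‖H‖)) * ‖H‖ ≤ ‖g‖ := by
    split_ifs with hH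
    · exact ⟨hΔ.le, le_rfl, by simp [hH]⟩
    · have hH0 : 0 < ‖H‖ := norm_pos_iff.mpr hH
      exact ⟨le_min hΔ.le (by positivity), min_le_left _ _,
        (le_div_iff₀ hH0).mp (min_le_right _ _)⟩
  obtain ⟨t, ht0, htΔ, ht⟩ := exists_cauchy_step g H hM0 hMΔ hMH
  refine ⟨⟨t, ht0, htΔ, le_trans (le_of_eq ?_) ht⟩, fun s hs => (hs.2 t ht0 htΔ).trans ht⟩
  simp only [map_smul, real_inner_smul_left, real_inner_smul_right, real_inner_self_eq_norm_sq]
  ring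
end
end

section
/- (Cauchy-point decrease, second form.) For every g ∈ ℝ^n, every symmetric n×n real matrix H, and every Δ > 0, there exists t ≥ 0 with t‖g‖ ≤ Δ such that s := −t·g satisfies ⟨g, s⟩ + (1/2)⟨s, H s⟩ ≤ −min{Δ‖g‖ − (1/2)Δ²‖H‖, (1/2)‖g‖²/‖H‖}, where the second argument of the min is interpreted as +∞ when H = 0 (so that the bound is −(Δ‖g‖ − (1/2)Δ²‖H‖) in that case). Consequently, every step s achieving Cauchy decrease for (g, H, Δ) satisfies the same inequality. -/
/-!
Since `min a b ≤ a`, both claims follow from the bound `-(Δ‖g‖ − (1/2)Δ²‖H‖)` alone, and this is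
achieved, for `g ≠ 0`, by the step of full length along `-g`, that is `t = Δ / ‖g‖`: its linear term is `-Δ‖g‖`,
and its quadratic term is at most `(1/2)Δ²‖H‖` because `⟪g, H g⟫ ≤ ‖H‖‖g‖²`.
`CauchyDecrease` compares an arbitrary step with exactly such a `t`, which gives the second claim.
-/

open RealInnerProductSpace Classical

noncomputable section

/-- The model decrease of the full-length step along `-g`. When `g = 0` the witness is `t = 0` and
the bound holds because its right-hand side is nonnegative. -/
theorem exists_full_step_decrease {n : ℕ} (g : EuclideanSpace ℝ (Fin n))
    (H : EuclideanSpace ℝ (Fin n) →L[ℝ] EuclideanSpace ℝ (Fin n)) (Δ : ℝ) (hΔ : 0 < Δ) :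
    ∃ t : ℝ, 0 ≤ t ∧ t * ‖g‖ ≤ Δ ∧
      -(t * ‖g‖^2) + (1/2) * t^2 * ⟪g, H g⟫ ≤ -(Δ * ‖g‖ - (1/2) * Δ^2 * ‖H‖) := by
  rcases eq_or_ne g 0 with rfl | hg
  · refine ⟨0, le_rfl, by simpa using hΔ.le, ?_⟩
    have : 0 ≤ (1/2) * Δ^2 * ‖H‖ := by positivity
    simp only [norm_zero]
    linarith
  · have hg' : 0 < ‖g‖ := norm_pos_iff.mpr hg
    have hcurv : ⟪g, H g⟫ ≤ ‖H‖ * ‖g‖^2 := by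
      calc ⟪g, H g⟫ ≤ ‖g‖ * ‖H g‖ := real_inner_le_norm _ _
        _ ≤ ‖g‖ * (‖H‖ * ‖g‖) := by gcongr; exact H.le_opNorm g
        _ = ‖H‖ * ‖g‖^2 := by ring
    refine ⟨Δ / ‖g‖, by positivity, (div_mul_cancel₀ _ hg'.ne').le, ?_⟩
    calc -(Δ / ‖g‖ * ‖g‖^2) + (1/2) * (Δ / ‖g‖)^2 * ⟪g, H g⟫
        ≤ -(Δ / ‖g‖ * ‖g‖^2) + (1/2) * (Δ / ‖g‖)^2 * (‖H‖ * ‖g‖^2) := by gcongr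
      _ = -(Δ * ‖g‖ - (1/2) * Δ^2 * ‖H‖) := by field_simp; ring

/-- Cauchy-point decrease, second form: there is a feasible Cauchy step `-t • g`
whose model value is at most `-min{Δ‖g‖ − (1/2)Δ²‖H‖, (1/2)‖g‖²/‖H‖}` (with the second
argument of the min interpreted as `+∞` when `H = 0`, so that the bound is
`-(Δ‖g‖ − (1/2)Δ²‖H‖)` in that case), and consequently every step achieving Cauchy decrease
satisfies the same bound. -/
theorem cauchy_decrease_second_form
    {n : ℕ} (g : EuclideanSpace ℝ (Fin n))
    (H : EuclideanSpace ℝ (Fin n) →L[ℝ] EuclideanSpace ℝ (Fin n))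
    (hHsymm : ∀ u v, ⟪H u, v⟫ = ⟪u, H v⟫)
    (Δ : ℝ) (hΔ : 0 < Δ) :
    (∃ t : ℝ, 0 ≤ t ∧ t * ‖g‖ ≤ Δ ∧
      ⟪g, (-t) • g⟫ + (1/2) * ⟪(-t) • g, H ((-t) • g)⟫ ≤
        -(if H = 0 then Δ * ‖g‖ - (1/2) * Δ^2 * ‖H‖
          else min (Δ * ‖g‖ - (1/2) * Δ^2 * ‖H‖) ((1/2) * ‖g‖^2 / ‖H‖))) ∧
    (∀ s : EuclideanSpace ℝ (Fin n), CauchyDecrease g H Δ s →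
      ⟪g, s⟫ + (1/2) * ⟪s, H s⟫ ≤
        -(if H = 0 then Δ * ‖g‖ - (1/2) * Δ^2 * ‖H‖
          else min (Δ * ‖g‖ - (1/2) * Δ^2 * ‖H‖) ((1/2) * ‖g‖^2 / ‖H‖))) := by
  obtain ⟨t, ht0, htΔ, ht⟩ := exists_full_step_decrease g H Δ hΔ
  have hbound : -(Δ * ‖g‖ - (1/2) * Δ^2 * ‖H‖) ≤
      -(if H = 0 then Δ * ‖g‖ - (1/2) * Δ^2 * ‖H‖
          else min (Δ * ‖g‖ - (1/2) * Δ^2 * ‖H‖) ((1/2) * ‖g‖^2 / ‖H‖)) := by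
    split_ifs
    · exact le_rfl
    · exact neg_le_neg (min_le_left _ _)
  refine ⟨⟨t, ht0, htΔ, ?_⟩, fun s hs => ((hs.2 t ht0 htΔ).trans ht).trans hbound⟩
  refine le_trans (le_of_eq ?_) (ht.trans hbound)
  rw [map_smul, real_inner_smul_left, real_inner_smul_right, real_inner_smul_right,
    real_inner_self_eq_norm_sq]
  ring
end
end

section
/- (Fundamental per-iteration bound.) Let f : ℝ^n → ℝ be twice continuously differentiable with ∇f Lipschitz continuous with constant L_g > 0. Let x, g ∈ ℝ^n, H a symmetric n×n matrix, and let α > 0 and γ1 ≥ γ2 > 0 satisfy α ≤ γ2/(4γ1²(L_g + ‖H‖)). Set Δ := Δ(α, γ1, γ2, g) and let s ∈ ℝ^n achieve Cauchy decrease for (g, H, Δ). Then f(x + s) ≤ f(x) − (1/8)γ2·α·‖g‖² + (γ1²/γ2)·α·‖∇f(x) − g‖². -/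
/-!
The radius satisfies `γ2 α ‖g‖ ≤ Δ ≤ γ1 α ‖g‖` in each of its three regimes. The upper bound
controls `‖s‖`; the lower bound makes `t = γ2 α` admissible in the Cauchy decrease condition.
Inserting both in the descent lemma `f (x + s) ≤ f x + ⟪∇f x, s⟫ + (L_g / 2) ‖s‖²`, the stepsize
restriction makes each of the two second-order terms at most `(1/8) γ2 α ‖g‖²`, and Young's
inequality splits the gradient-error term `⟪∇f x - g, s⟫ ≤ γ1 α ‖∇f x - g‖ ‖g‖`.
-/

open RealInnerProductSpace

noncomputable section

/-- The TRish trust-region radius `Δ(α, γ1, γ2, g)`. -/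
def radius {n : ℕ} (α γ1 γ2 : ℝ) (g : EuclideanSpace ℝ (Fin n)) : ℝ :=
  if ‖g‖ < 1/γ1 then γ1 * α * ‖g‖
  else if ‖g‖ ≤ 1/γ2 then α
  else γ2 * α * ‖g‖

/-- The descent lemma: a function with Lipschitz gradient is bounded above by its first-order
model plus a quadratic, because the gap to that bound is antitone along the segment. -/
theorem descent_lemma {n : ℕ} (f : EuclideanSpace ℝ (Fin n) → ℝ) (L : ℝ)
    (hf : Differentiable ℝ f)
    (hlip : ∀ y z, ‖gradient f y - gradient f z‖ ≤ L * ‖y - z‖)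
    (x s : EuclideanSpace ℝ (Fin n)) :
    f (x + s) ≤ f x + ⟪gradient f x, s⟫ + L / 2 * ‖s‖ ^ 2 := by
  let φ : ℝ → ℝ := fun τ => f (x + τ • s) - τ * ⟪gradient f x, s⟫ - L / 2 * ‖s‖ ^ 2 * τ ^ 2
  have hφ : ∀ τ : ℝ, HasDerivAt φ
      (⟪gradient f (x + τ • s), s⟫ - ⟪gradient f x, s⟫ - L * ‖s‖ ^ 2 * τ) τ := by
    intro τ
    have h1 : HasDerivAt (fun τ : ℝ => x + τ • s) s τ := by
      simpa using ((hasDerivAt_id τ).smul_const s).const_add x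
    have h2 := (hf (x + τ • s)).hasGradientAt.hasFDerivAt.comp_hasDerivAt τ h1
    have h3 : HasDerivAt (fun τ : ℝ => f (x + τ • s)) ⟪gradient f (x + τ • s), s⟫ τ := by
      simpa [Function.comp_def] using h2
    have h4 := (h3.sub ((hasDerivAt_id τ).mul_const ⟪gradient f x, s⟫)).sub
      (((hasDerivAt_id τ).pow 2).const_mul (L / 2 * ‖s‖ ^ 2))
    refine h4.congr_deriv ?_
    simp
    ring
  have hanti : AntitoneOn φ (Set.Icc 0 1) := by
    refine antitoneOn_of_deriv_nonpos (convex_Icc 0 1)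
      (fun τ _ => (hφ τ).continuousAt.continuousWithinAt)
      (fun τ _ => (hφ τ).differentiableAt.differentiableWithinAt) ?_
    intro τ hτ
    rw [interior_Icc] at hτ
    rw [(hφ τ).deriv, ← inner_sub_left]
    have h1 := real_inner_le_norm (gradient f (x + τ • s) - gradient f x) s
    have h2 := hlip (x + τ • s) x
    rw [add_sub_cancel_left, norm_smul, Real.norm_of_nonneg hτ.1.le] at h2
    nlinarith [mul_le_mul_of_nonneg_right h2 (norm_nonneg s)]
  have h01 := hanti (by simp) (by simp) (zero_le_one (α := ℝ))
  simp only [φ, one_smul, zero_smul, add_zero] at h01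
  linarith

theorem radius_bounds {n : ℕ} (α γ1 γ2 : ℝ) (hγ2 : 0 < γ2) (hγ12 : γ2 ≤ γ1) (hα : 0 < α)
    (g : EuclideanSpace ℝ (Fin n)) :
    γ2 * α * ‖g‖ ≤ radius α γ1 γ2 g ∧ radius α γ1 γ2 g ≤ γ1 * α * ‖g‖ := by
  have hγ1 : 0 < γ1 := hγ2.trans_le hγ12
  have h12 : γ2 * α * ‖g‖ ≤ γ1 * α * ‖g‖ := by gcongr
  unfold radius
  split_ifs with h1 h2
  · exact ⟨h12, le_rfl⟩
  · rw [not_lt, div_le_iff₀ hγ1] at h1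
    rw [le_div_iff₀ hγ2] at h2
    constructor <;> nlinarith
  · exact ⟨le_rfl, h12⟩

/-- Fundamental per-iteration bound. -/
theorem fundamental_per_iteration_bound
    {n : ℕ} (hn : 1 ≤ n)
    (f : EuclideanSpace ℝ (Fin n) → ℝ)
    (L_g : ℝ) (hLg : 0 < L_g)
    (hf : ContDiff ℝ 2 f)
    (hlip : ∀ y z, ‖gradient f y - gradient f z‖ ≤ L_g * ‖y - z‖)
    (x g : EuclideanSpace ℝ (Fin n))
    (H : EuclideanSpace ℝ (Fin n) →L[ℝ] EuclideanSpace ℝ (Fin n))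
    (hHsymm : ∀ u v, ⟪H u, v⟫ = ⟪u, H v⟫)
    (α γ1 γ2 : ℝ) (hγ2 : 0 < γ2) (hγ12 : γ2 ≤ γ1)
    (hα : 0 < α) (hαub : α ≤ γ2 / (4 * γ1^2 * (L_g + ‖H‖)))
    (s : EuclideanSpace ℝ (Fin n))
    (hs : CauchyDecrease g H (radius α γ1 γ2 g) s) :
    f (x + s) ≤ f x - (1/8) * γ2 * α * ‖g‖^2
      + (γ1^2 / γ2) * α * ‖gradient f x - g‖^2 := by
  obtain ⟨hsΔ, hC⟩ := hs
  obtain ⟨hlo, hhi⟩ := radius_bounds α γ1 γ2 hγ2 hγ12 hα g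
  have hγ1 : 0 < γ1 := hγ2.trans_le hγ12
  have hs1 : ‖s‖ ≤ γ1 * α * ‖g‖ := hsΔ.trans hhi
  have hC' := hC (γ2 * α) (by positivity) hlo
  have hdesc := descent_lemma f L_g (hf.differentiable (by norm_num)) hlip x s
  have hquad : ∀ v, |⟪v, H v⟫| ≤ ‖H‖ * ‖v‖ ^ 2 := by
    intro v
    calc |⟪v, H v⟫| ≤ ‖v‖ * ‖H v‖ := abs_real_inner_le_norm v (H v)
      _ ≤ ‖v‖ * (‖H‖ * ‖v‖) := by gcongr; exact H.le_opNorm v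
      _ = ‖H‖ * ‖v‖ ^ 2 := by ring
  have hsH := (abs_le.mp (hquad s)).1
  have hgH := (abs_le.mp (hquad g)).2
  have herr := real_inner_le_norm (gradient f x - g) s
  rw [inner_sub_left] at herr
  have hH := norm_nonneg H
  have hK : 0 < L_g + ‖H‖ := by positivity
  have hstep : α * (γ1 ^ 2 * (L_g + ‖H‖)) ≤ γ2 / 4 := by
    rw [le_div_iff₀ (by positivity)] at hαub
    linarith
  have hsecond : (L_g + ‖H‖) / 2 * ‖s‖ ^ 2 ≤ 1 / 8 * γ2 * α * ‖g‖ ^ 2 := by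
    calc (L_g + ‖H‖) / 2 * ‖s‖ ^ 2 ≤ (L_g + ‖H‖) / 2 * (γ1 * α * ‖g‖) ^ 2 := by gcongr
      _ = α * (γ1 ^ 2 * (L_g + ‖H‖)) * (α * ‖g‖ ^ 2 / 2) := by ring
      _ ≤ γ2 / 4 * (α * ‖g‖ ^ 2 / 2) := by gcongr
      _ = 1 / 8 * γ2 * α * ‖g‖ ^ 2 := by ring
  have hcauchy : 1 / 2 * (γ2 * α) ^ 2 * ⟪g, H g⟫ ≤ 1 / 8 * γ2 * α * ‖g‖ ^ 2 := by
    calc 1 / 2 * (γ2 * α) ^ 2 * ⟪g, H g⟫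
        ≤ 1 / 2 * (γ1 * α) ^ 2 * ((L_g + ‖H‖) * ‖g‖ ^ 2) := by
          have : ‖H‖ * ‖g‖ ^ 2 ≤ (L_g + ‖H‖) * ‖g‖ ^ 2 := by gcongr; linarith
          refine (mul_le_mul_of_nonneg_left (hgH.trans this) (by positivity)).trans ?_
          gcongr
      _ = α * (γ1 ^ 2 * (L_g + ‖H‖)) * (α * ‖g‖ ^ 2 / 2) := by ring
      _ ≤ γ2 / 4 * (α * ‖g‖ ^ 2 / 2) := by gcongr
      _ = 1 / 8 * γ2 * α * ‖g‖ ^ 2 := by ring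
  have hyoung : ‖gradient f x - g‖ * ‖s‖ ≤
      γ1 ^ 2 / γ2 * α * ‖gradient f x - g‖ ^ 2 + 1 / 4 * γ2 * α * ‖g‖ ^ 2 := by
    have h1 : ‖gradient f x - g‖ * ‖s‖ ≤ ‖gradient f x - g‖ * (γ1 * α * ‖g‖) := by gcongr
    have h2 : 0 ≤ α / γ2 * (γ1 * ‖gradient f x - g‖ - γ2 * ‖g‖ / 2) ^ 2 := by positivity
    have h3 : α / γ2 * (γ1 * ‖gradient f x - g‖ - γ2 * ‖g‖ / 2) ^ 2 =
        γ1 ^ 2 / γ2 * α * ‖gradient f x - g‖ ^ 2 + 1 / 4 * γ2 * α * ‖g‖ ^ 2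
          - ‖gradient f x - g‖ * (γ1 * α * ‖g‖) := by
      field_simp
      ring
    linarith
  have hpos : 0 ≤ γ2 * α * ‖g‖ ^ 2 := by positivity
  linarith
end
end

section
/- (Second fundamental per-iteration bound, in expectation.) Let f : ℝ^n → ℝ be twice continuously differentiable with ∇f Lipschitz continuous with constant L_g > 0. Fix x ∈ ℝ^n and constants η > 0, M_H > 0, γ1 ≥ γ2 > 0, α > 0 with M_H ≤ η/(2γ1), γ1 − γ2 = (1/2)η·γ1·α, and 0 < α ≤ min{γ2/(4γ1²(L_g + M_H)), 1/(6η + 2γ1(L_g + M_H))}. On a probability space (Ω, ℱ, P), let g : Ω → ℝ^n be measurable with E[g] = ∇f(x) and E[‖g‖²] < ∞, let H be a random symmetric n×n matrix with ‖H(ω)‖ ≤ M_H almost surely, and let s : Ω → ℝ^n be such that almost surely s(ω) achieves Cauchy decrease for (g(ω), H(ω), Δ(α, γ1, γ2, g(ω))). Then E[f(x + s)] ≤ f(x) − (1/4)γ2·α·‖∇f(x)‖² + (1/2)(3η + γ1(L_g + M_H))·γ1·α²·E[‖∇f(x) − g‖²]. -/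
/-!
The step `s` is compared with the gradient step `-γ1 α g`. Put `d = s + γ1 α g` and `G = ∇f(x)`.
The Cauchy decrease at `t = γ2 α`, together with `γ2 α ‖g‖ ≤ Δ ≤ γ1 α ‖g‖`, gives
`⟪g, s⟫ ≤ -γ1 α ‖g‖² + η γ1 α² ‖g‖²`, and expanding the square then gives
`‖d‖² ≤ 2 η γ1² α³ ‖g‖²` (`norm_sq_deviation_le`). Hence, by Young's inequality,
`⟪G, d⟫ ≤ (1/2) γ1 α ‖G‖² + η γ1 α² ‖g‖²`. It is essential to pair `d` with the deterministic
vector `G` rather than with the noise `G - g`: the latter would cost a variance term of order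
`α ^ (3/2)`.

The descent lemma (`abs_taylor_le`) turns this into the pointwise bound
`f (x + s) ≤ f x - γ1 α ⟪G, g⟫ + (1/2) γ1 α ‖G‖² + (η + (1/2) γ1 L_g) γ1 α² ‖g‖²`.
On taking expectations, `E[⟪G, g⟫] = ‖G‖²` and `E[‖g‖²] = ‖G‖² + E[‖G - g‖²]`, and the smallness of
`α` absorbs the terms in `‖G‖²`.
-/

open MeasureTheory RealInnerProductSpace

noncomputable section

/-- Descent lemma in two-sided form: the upper bound drives the estimate, and both sides
together give integrability of `f (x + s)`. -/
lemma abs_taylor_le {n : ℕ} {f : EuclideanSpace ℝ (Fin n) → ℝ} {L : ℝ}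
    (hf : Differentiable ℝ f)
    (hlip : ∀ y z, ‖gradient f y - gradient f z‖ ≤ L * ‖y - z‖)
    (x s : EuclideanSpace ℝ (Fin n)) :
    |f (x + s) - f x - ⟪gradient f x, s⟫| ≤ L / 2 * ‖s‖ ^ 2 := by
  have hline : ∀ t : ℝ, HasDerivAt (fun t : ℝ => x + t • s) s t := fun t => by
    simpa using ((hasDerivAt_id t).smul_const s).const_add x
  have hd : ∀ t : ℝ, HasDerivAt (fun t : ℝ => f (x + t • s) - f x - t * ⟪gradient f x, s⟫)
      (⟪gradient f (x + t • s) - gradient f x, s⟫) t := fun t => by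
    have h1 := (hf (x + t • s)).hasGradientAt.hasFDerivAt.comp_hasDerivAt t (hline t)
    have h2 := (h1.sub_const (f x)).sub ((hasDerivAt_id t).mul_const ⟪gradient f x, s⟫)
    have h3 : ⟪gradient f (x + t • s) - gradient f x, s⟫
        = (InnerProductSpace.toDual ℝ _ (gradient f (x + t • s))) s - 1 * ⟪gradient f x, s⟫ := by
      rw [inner_sub_left, one_mul, InnerProductSpace.toDual_apply_apply]
    rw [h3]
    exact h2
  have key := image_norm_le_of_norm_deriv_right_le_deriv_boundary (a := (0 : ℝ)) (b := 1)
    (f := fun t : ℝ => f (x + t • s) - f x - t * ⟪gradient f x, s⟫)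
    (B := fun t => L / 2 * ‖s‖ ^ 2 * t ^ 2) (B' := fun t => L * ‖s‖ ^ 2 * t)
    (fun t _ => (hd t).continuousAt.continuousWithinAt)
    (fun t _ => (hd t).hasDerivWithinAt) (by simp)
    (fun t => ((hasDerivAt_pow 2 t).const_mul (L / 2 * ‖s‖ ^ 2)).congr_deriv (by push_cast; ring))
    (fun t ht => by
      have h1 := hlip (x + t • s) x
      rw [add_sub_cancel_left, norm_smul, Real.norm_of_nonneg ht.1] at h1
      calc _ ≤ _ := norm_inner_le_norm _ _
        _ ≤ L * (t * ‖s‖) * ‖s‖ := by gcongr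
        _ = _ := by ring)
    (show (1 : ℝ) ∈ Set.Icc (0 : ℝ) 1 by simp)
  simpa using key

lemma le_radius {n : ℕ} {α γ1 γ2 : ℝ} (hα : 0 < α) (hγ2 : 0 < γ2) (h : γ2 ≤ γ1)
    (g : EuclideanSpace ℝ (Fin n)) : γ2 * α * ‖g‖ ≤ radius α γ1 γ2 g := by
  unfold radius
  split_ifs with h1 h2
  · gcongr
  · rw [le_div_iff₀ hγ2] at h2
    nlinarith
  · rfl

lemma radius_le {n : ℕ} {α γ1 γ2 : ℝ} (hα : 0 < α) (hγ2 : 0 < γ2) (h : γ2 ≤ γ1)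
    (g : EuclideanSpace ℝ (Fin n)) : radius α γ1 γ2 g ≤ γ1 * α * ‖g‖ := by
  have hγ1 : 0 < γ1 := hγ2.trans_le h
  unfold radius
  split_ifs with h1 h2
  · rfl
  · rw [not_lt, div_le_iff₀ hγ1] at h1
    nlinarith
  · gcongr

lemma abs_inner_apply_le {n : ℕ} {H : EuclideanSpace ℝ (Fin n) →L[ℝ] EuclideanSpace ℝ (Fin n)}
    {M : ℝ} (hH : ‖H‖ ≤ M) (v : EuclideanSpace ℝ (Fin n)) : |⟪v, H v⟫| ≤ M * ‖v‖ ^ 2 := by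
  calc |⟪v, H v⟫| ≤ ‖v‖ * ‖H v‖ := abs_real_inner_le_norm _ _
    _ ≤ ‖v‖ * (M * ‖v‖) := by gcongr; exact H.le_of_opNorm_le hH v
    _ = _ := by ring

/-- A step achieving Cauchy decrease is close to the gradient step `-γ1 α g`: the deviation is of
relative order `√α`. -/
lemma norm_sq_deviation_le {n : ℕ} {g s : EuclideanSpace ℝ (Fin n)}
    {H : EuclideanSpace ℝ (Fin n) →L[ℝ] EuclideanSpace ℝ (Fin n)} {η M γ1 γ2 α : ℝ}
    (hM : 0 < M) (hα : 0 < α) (hγ2 : 0 < γ2) (hγ12 : γ2 ≤ γ1) (hMη : M ≤ η / (2 * γ1))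
    (hdiff : γ1 - γ2 = (1/2) * η * γ1 * α) (hH : ‖H‖ ≤ M)
    (hs : CauchyDecrease g H (radius α γ1 γ2 g) s) :
    ‖s + (γ1 * α) • g‖ ^ 2 ≤ 2 * η * γ1 ^ 2 * α ^ 3 * ‖g‖ ^ 2 := by
  have hγ1 : 0 < γ1 := hγ2.trans_le hγ12
  obtain ⟨hsΔ, hs⟩ := hs
  have hsn : ‖s‖ ^ 2 ≤ (γ1 * α) ^ 2 * ‖g‖ ^ 2 := by
    rw [← mul_pow]
    exact pow_le_pow_left₀ (norm_nonneg s) (hsΔ.trans (radius_le hα hγ2 hγ12 g)) 2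
  have hdec := hs (γ2 * α) (by positivity) (le_radius hα hγ2 hγ12 g)
  have hHg := (abs_le.1 (abs_inner_apply_le hH g)).2
  have hHs := (abs_le.1 (abs_inner_apply_le hH s)).1
  have hsM : M * ‖s‖ ^ 2 ≤ M * ((γ1 * α) ^ 2 * ‖g‖ ^ 2) := by gcongr
  have hgM : (γ2 * α) ^ 2 * ⟪g, H g⟫ ≤ (γ1 * α) ^ 2 * (M * ‖g‖ ^ 2) := by
    calc _ ≤ (γ2 * α) ^ 2 * (M * ‖g‖ ^ 2) := by gcongr
      _ ≤ _ := by gcongr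
  have hMη' : M * γ1 ≤ η / 2 := by
    rw [le_div_iff₀ (by positivity)] at hMη
    linarith
  have hcurv : M * γ1 * (γ1 * α ^ 2 * ‖g‖ ^ 2) ≤ η / 2 * (γ1 * α ^ 2 * ‖g‖ ^ 2) := by gcongr
  have hγ2eq : γ2 = γ1 - (1/2) * η * γ1 * α := by linarith
  have hin : ⟪g, s⟫ ≤ -(γ1 * α * ‖g‖ ^ 2) + η * γ1 * α ^ 2 * ‖g‖ ^ 2 := by
    have : γ2 * α * ‖g‖ ^ 2 = γ1 * α * ‖g‖ ^ 2 - (1/2) * η * γ1 * α ^ 2 * ‖g‖ ^ 2 := by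
      rw [hγ2eq]; ring
    linarith
  have hin' := mul_le_mul_of_nonneg_left hin (show 0 ≤ 2 * (γ1 * α) by positivity)
  rw [norm_add_sq_real, inner_smul_right, real_inner_comm, norm_smul, mul_pow,
    Real.norm_of_nonneg (by positivity)]
  linarith

/-- Pointwise form of the per-iteration bound, before taking expectations. -/
lemma pointwise_bound {n : ℕ} {f : EuclideanSpace ℝ (Fin n) → ℝ} {L : ℝ} (hL : 0 < L)
    (hf : Differentiable ℝ f)
    (hlip : ∀ y z, ‖gradient f y - gradient f z‖ ≤ L * ‖y - z‖)
    {x g s : EuclideanSpace ℝ (Fin n)}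
    {H : EuclideanSpace ℝ (Fin n) →L[ℝ] EuclideanSpace ℝ (Fin n)} {η M γ1 γ2 α : ℝ}
    (hM : 0 < M) (hα : 0 < α) (hγ2 : 0 < γ2) (hγ12 : γ2 ≤ γ1) (hMη : M ≤ η / (2 * γ1))
    (hdiff : γ1 - γ2 = (1/2) * η * γ1 * α) (hH : ‖H‖ ≤ M)
    (hs : CauchyDecrease g H (radius α γ1 γ2 g) s) :
    f (x + s) ≤ f x + (1/2) * γ1 * α * ‖gradient f x‖ ^ 2 - γ1 * α * ⟪gradient f x, g⟫
      + (η + (1/2) * γ1 * L) * γ1 * α ^ 2 * ‖g‖ ^ 2 := by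
  have hγ1 : 0 < γ1 := hγ2.trans_le hγ12
  have hdev := norm_sq_deviation_le hM hα hγ2 hγ12 hMη hdiff hH hs
  have hT := (abs_le.1 (abs_taylor_le hf hlip x s)).2
  have hsn : L / 2 * ‖s‖ ^ 2 ≤ L / 2 * (γ1 * α * ‖g‖) ^ 2 := by
    gcongr
    exact hs.1.trans (radius_le hα hγ2 hγ12 g)
  set G := gradient f x
  set d := s + (γ1 * α) • g with hd
  have hsd : ⟪G, s⟫ = ⟪G, d⟫ - γ1 * α * ⟪G, g⟫ := by
    rw [hd, inner_add_right, inner_smul_right]; ring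
  -- Young's inequality, with weight `γ1 α` chosen so that half of the decrease `γ1 α ‖G‖²` is left
  have hY : ⟪G, d⟫ ≤ (1/2) * γ1 * α * ‖G‖ ^ 2 + η * γ1 * α ^ 2 * ‖g‖ ^ 2 := by
    have h1 := real_inner_le_norm G d
    have h2 := sq_nonneg (γ1 * α * ‖G‖ - ‖d‖)
    have h3 : (γ1 * α) * ⟪G, d⟫ ≤
        (γ1 * α) * ((1/2) * γ1 * α * ‖G‖ ^ 2 + η * γ1 * α ^ 2 * ‖g‖ ^ 2) := by
      have := mul_le_mul_of_nonneg_left h1 (show 0 ≤ γ1 * α by positivity)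
      nlinarith
    exact le_of_mul_le_mul_left h3 (by positivity)
  linarith

/-- Second fundamental per-iteration bound, in expectation. -/
theorem second_fundamental_bound_expectation
    {n : ℕ} (hn : 1 ≤ n)
    (f : EuclideanSpace ℝ (Fin n) → ℝ)
    (L_g : ℝ) (hLg : 0 < L_g)
    (hf : ContDiff ℝ 2 f)
    (hlip : ∀ y z, ‖gradient f y - gradient f z‖ ≤ L_g * ‖y - z‖)
    (x : EuclideanSpace ℝ (Fin n))
    (η M_H γ1 γ2 α : ℝ)
    (hη : 0 < η) (hMH : 0 < M_H) (hγ2 : 0 < γ2) (hγ12 : γ2 ≤ γ1)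
    (hMHη : M_H ≤ η / (2 * γ1))
    (hγdiff : γ1 - γ2 = (1/2) * η * γ1 * α)
    (hα : 0 < α)
    (hα1 : α ≤ γ2 / (4 * γ1^2 * (L_g + M_H)))
    (hα2 : α ≤ 1 / (6 * η + 2 * γ1 * (L_g + M_H)))
    {Ω : Type*} {m0 : MeasurableSpace Ω} (P : Measure Ω) [IsProbabilityMeasure P]
    (g : Ω → EuclideanSpace ℝ (Fin n))
    (hg_meas : AEStronglyMeasurable g P)
    (hg_int : Integrable g P)
    (hg_mean : ∫ ω, g ω ∂P = gradient f x)
    (hg_moment : Integrable (fun ω => ‖g ω‖^2) P)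
    (H : Ω → (EuclideanSpace ℝ (Fin n) →L[ℝ] EuclideanSpace ℝ (Fin n)))
    (hH_meas : AEStronglyMeasurable H P)
    (hHsymm : ∀ ω u v, ⟪H ω u, v⟫ = ⟪u, H ω v⟫)
    (hHbd : ∀ᵐ ω ∂P, ‖H ω‖ ≤ M_H)
    (s : Ω → EuclideanSpace ℝ (Fin n))
    (hs_meas : AEStronglyMeasurable s P)
    (hcauchy : ∀ᵐ ω ∂P, CauchyDecrease (g ω) (H ω) (radius α γ1 γ2 (g ω)) (s ω)) :
    ∫ ω, f (x + s ω) ∂P ≤ f x - (1/4) * γ2 * α * ‖gradient f x‖^2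
      + (1/2) * (3 * η + γ1 * (L_g + M_H)) * γ1 * α^2
        * ∫ ω, ‖gradient f x - g ω‖^2 ∂P := by
  have hγ1 : 0 < γ1 := hγ2.trans_le hγ12
  have hfd : Differentiable ℝ f := hf.differentiable (by norm_num)
  set G := gradient f x with hG
  have hGg_int : Integrable (fun ω => ⟪G, g ω⟫) P := hg_int.const_inner G
  have hGg : ∫ ω, ⟪G, g ω⟫ ∂P = ‖G‖ ^ 2 := by
    rw [integral_inner hg_int G, hg_mean, real_inner_self_eq_norm_sq]
  have hint (a b : ℝ) : Integrable (fun ω => a - b * ⟪G, g ω⟫) P :=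
    (integrable_const _).sub (hGg_int.const_mul _)
  have hval (a b c : ℝ) : ∫ ω, (a - b * ⟪G, g ω⟫ + c * ‖g ω‖ ^ 2) ∂P
      = a - b * ‖G‖ ^ 2 + c * ∫ ω, ‖g ω‖ ^ 2 ∂P := by
    rw [integral_add (hint a b) (hg_moment.const_mul c),
      integral_sub (integrable_const _) (hGg_int.const_mul _), integral_const_mul,
      integral_const_mul, hGg]
    simp
  have hvar : ∫ ω, ‖G - g ω‖ ^ 2 ∂P = ∫ ω, ‖g ω‖ ^ 2 ∂P - ‖G‖ ^ 2 := by
    have : ∀ ω, ‖G - g ω‖ ^ 2 = ‖G‖ ^ 2 - 2 * ⟪G, g ω⟫ + 1 * ‖g ω‖ ^ 2 :=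
      fun ω => by rw [norm_sub_sq_real, one_mul]
    simp_rw [this]
    rw [hval]
    ring
  have hvar0 : 0 ≤ ∫ ω, ‖G - g ω‖ ^ 2 ∂P := integral_nonneg fun ω => by positivity
  have hs_le : ∀ᵐ ω ∂P, ‖s ω‖ ≤ γ1 * α * ‖g ω‖ := by
    filter_upwards [hcauchy] with ω h
    exact h.1.trans (radius_le hα hγ2 hγ12 _)
  have hf_int : Integrable (fun ω => f (x + s ω)) P := by
    have hdom : Integrable (fun ω => |f x| + ‖G‖ * (γ1 * α * ‖g ω‖)
        + L_g / 2 * ((γ1 * α) ^ 2 * ‖g ω‖ ^ 2)) P :=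
      ((integrable_const _).add ((hg_int.norm.const_mul _).const_mul _)).add
        ((hg_moment.const_mul _).const_mul _)
    refine hdom.mono' (hf.continuous.comp_aestronglyMeasurable
      (aestronglyMeasurable_const.add hs_meas)) ?_
    filter_upwards [hs_le] with ω h
    have h1 := abs_le.1 (abs_taylor_le hfd hlip x (s ω))
    have h2 := abs_le.1 (abs_real_inner_le_norm G (s ω))
    have h3 : ‖G‖ * ‖s ω‖ ≤ ‖G‖ * (γ1 * α * ‖g ω‖) := by gcongr
    have h4 : L_g / 2 * ‖s ω‖ ^ 2 ≤ L_g / 2 * ((γ1 * α) ^ 2 * ‖g ω‖ ^ 2) := by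
      rw [← mul_pow]; gcongr
    have h5 := abs_le.1 (le_refl |f x|)
    rw [← hG] at h1
    rw [Real.norm_eq_abs, abs_le]
    constructor <;> linarith [h1.1, h1.2, h2.1, h2.2, h5.1, h5.2]
  have hmain : ∫ ω, f (x + s ω) ∂P ≤ f x + (1/2) * γ1 * α * ‖G‖ ^ 2 - γ1 * α * ‖G‖ ^ 2
      + (η + (1/2) * γ1 * L_g) * γ1 * α ^ 2 * ∫ ω, ‖g ω‖ ^ 2 ∂P := by
    calc ∫ ω, f (x + s ω) ∂P
        ≤ ∫ ω, ((f x + (1/2) * γ1 * α * ‖G‖ ^ 2 - γ1 * α * ⟪G, g ω⟫)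
          + (η + (1/2) * γ1 * L_g) * γ1 * α ^ 2 * ‖g ω‖ ^ 2) ∂P := by
          refine integral_mono_ae hf_int ((hint _ _).add (hg_moment.const_mul _)) ?_
          filter_upwards [hHbd, hcauchy] with ω h1 h2
          exact pointwise_bound hLg hfd hlip hMH hα hγ2 hγ12 hMHη hγdiff h1 h2
      _ = _ := hval _ _ _
  rw [le_div_iff₀ (by positivity)] at hα2
  rw [show ∫ ω, ‖g ω‖ ^ 2 ∂P = ‖G‖ ^ 2 + ∫ ω, ‖G - g ω‖ ^ 2 ∂P by rw [hvar]; ring] at hmain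
  generalize ∫ ω, ‖G - g ω‖ ^ 2 ∂P = V at *
  have hV : (η + (1/2) * γ1 * L_g) * (γ1 * α ^ 2 * V)
      ≤ (1/2) * (3 * η + γ1 * (L_g + M_H)) * (γ1 * α ^ 2 * V) := by
    gcongr
    nlinarith [mul_pos hγ1 hMH]
  have hsmall : α * (η + (1/2) * γ1 * L_g) ≤ 1/4 := by
    nlinarith [mul_pos hα hη, mul_pos hα (mul_pos hγ1 hMH)]
  have hGsmall : α * (η + (1/2) * γ1 * L_g) * (γ1 * α * ‖G‖ ^ 2)
      ≤ 1/4 * (γ1 * α * ‖G‖ ^ 2) := by gcongr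
  have hγ : γ2 * (α * ‖G‖ ^ 2) ≤ γ1 * (α * ‖G‖ ^ 2) := by gcongr
  linarith
end
end
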